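/- Let f : ℝ → ℝ be continuous and 1-periodic, and define h(x) := ∫_{[0,1)} g(x−y) f(y) dy, where g(z) := cosh(z − ⌊z⌋ − 1/2)/(2·sinh(1/2)) and ⌊·⌋ is the greatest-integer function. Then h is 1-periodic, twice differentiable on ℝ, and satisfies h(x) − h''(x) = f(x) for all x ∈ ℝ. -/

import Mathlib

open MeasureTheory

/-!
On `[0, T]` the Green function `k` of `1 - ∂²` is a smooth solution of `k'' = k`, and periodicity
of `f` and `g` turns the convolution over a period into `∫ y in (x - T)..x, k (x - y) • f y`, where
only this smooth branch is seen. Each differentiation by the Leibniz rule moves the derivative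
onto the kernel and adds the boundary term `(k 0 - k T) • f x`. The branch satisfies `k 0 = k T`
while its derivative has `k' 0 - k' T = -1`, so the first derivative produces no boundary term
and the second one produces `-f`.
-/

open Set Function

section LeibnizRule

variable {E : Type*} [NormedAddCommGroup E] [NormedSpace ℝ E] {F F' : ℝ → ℝ → E}

theorem hasDerivAt_intervalIntegral_of_continuous (hF : ∀ x, Continuous (F x))
    (hF' : Continuous (uncurry F')) (hderiv : ∀ x y, HasDerivAt (F · y) (F' x y) x)
    (a b x : ℝ) :
    HasDerivAt (fun x ↦ ∫ y in a..b, F x y) (∫ y in a..b, F' x y) x := by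
  obtain ⟨M, hM⟩ := ((isCompact_closedBall x 1).prod isCompact_uIcc).exists_bound_of_continuousOn
    (f := uncurry F') (s := Metric.closedBall x 1 ×ˢ uIcc a b) hF'.continuousOn
  refine (intervalIntegral.hasDerivAt_integral_of_dominated_loc_of_deriv_le (bound := fun _ ↦ M)
    (Metric.closedBall_mem_nhds x one_pos)
    (.of_forall fun x ↦ (hF x).aestronglyMeasurable) ((hF x).intervalIntegrable a b)
    (hF'.uncurry_left x).aestronglyMeasurable (.of_forall fun y hy z hz ↦ ?_)
    intervalIntegrable_const (.of_forall fun y _ z _ ↦ hderiv z y)).2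
  exact hM (z, y) ⟨hz, uIoc_subset_uIcc hy⟩

variable [CompleteSpace E]

theorem hasStrictFDerivAt_parametric_primitive (hF : Continuous (uncurry F))
    (hF' : Continuous (uncurry F')) (hderiv : ∀ x y, HasDerivAt (F · y) (F' x y) x)
    (a : ℝ) (p : ℝ × ℝ) :
    HasStrictFDerivAt (fun p : ℝ × ℝ ↦ ∫ y in a..p.2, F p.1 y)
      ((ContinuousLinearMap.toSpanSingleton ℝ (∫ y in a..p.2, F' p.1 y)).coprod
        (ContinuousLinearMap.toSpanSingleton ℝ (F p.1 p.2))) p := by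
  have continuous_toSpanSingleton :
      Continuous (ContinuousLinearMap.toSpanSingleton ℝ : E → ℝ →L[ℝ] E) :=
    (ContinuousLinearMap.toSpanSingletonCLE (𝕜 := ℝ) (E := E)).continuous
  refine hasStrictFDerivAt_uncurry_coprod (f := fun x s ↦ ∫ y in a..s, F x y)
    (f₁ := fun x s ↦ .toSpanSingleton ℝ (∫ y in a..s, F' x y))
    (f₂ := fun x s ↦ .toSpanSingleton ℝ (F x s)) (.of_forall fun q ↦ ?_) (.of_forall fun q ↦ ?_)
    ?_ ?_
  · exact (hasDerivAt_intervalIntegral_of_continuous (fun x ↦ hF.uncurry_left x) hF' hderiv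
      a q.2 q.1).hasFDerivAt
  · exact ((hF.uncurry_left q.1).integral_hasStrictDerivAt a q.2).hasDerivAt.hasFDerivAt
  · exact (continuous_toSpanSingleton.comp
      (intervalIntegral.continuous_parametric_primitive_of_continuous hF')).continuousAt
  · exact (continuous_toSpanSingleton.comp hF).continuousAt

theorem hasDerivAt_parametric_intervalIntegral (hF : Continuous (uncurry F))
    (hF' : Continuous (uncurry F')) (hderiv : ∀ x y, HasDerivAt (F · y) (F' x y) x)
    {a b : ℝ → ℝ} {a' b' x : ℝ} (ha : HasDerivAt a a' x) (hb : HasDerivAt b b' x) :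
    HasDerivAt (fun x ↦ ∫ y in a x..b x, F x y)
      (b' • F x (b x) - a' • F x (a x) + ∫ y in a x..b x, F' x y) x := by
  have primitive {c : ℝ → ℝ} {c' : ℝ} (hc : HasDerivAt c c' x) :
      HasDerivAt (fun x ↦ ∫ y in 0..c x, F x y)
        ((∫ y in 0..c x, F' x y) + c' • F x (c x)) x := by
    simpa [comp_def] using (hasStrictFDerivAt_parametric_primitive hF hF' hderiv 0
      (x, c x)).hasFDerivAt.comp_hasDerivAt x ((hasDerivAt_id x).prodMk hc)
  have integral_split {G : ℝ → ℝ → E} (hG : Continuous (uncurry G)) (z : ℝ) :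
      (∫ y in a z..b z, G z y) = (∫ y in 0..b z, G z y) - ∫ y in 0..a z, G z y :=
    (intervalIntegral.integral_interval_sub_left ((hG.uncurry_left z).intervalIntegrable _ _)
      ((hG.uncurry_left z).intervalIntegrable _ _)).symm
  rw [integral_split hF', funext (integral_split hF)]
  exact ((primitive hb).sub (primitive ha)).congr_deriv (by abel)

end LeibnizRule

section WindowConvolution

variable {E : Type*} [NormedAddCommGroup E] [NormedSpace ℝ E] {T : ℝ} {k k' : ℝ → ℝ} {f : ℝ → E}

/-- The convolution of `f` with the restriction of the kernel `k` to `[0, T]`. For `T`-periodic `f`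
it is the convolution on `ℝ / Tℤ` with the periodic extension of that restriction; integrating over
the moving window `[x - T, x]` keeps the argument `x - y` of `k` in `[0, T]`. -/
noncomputable def windowConvolution (T : ℝ) (k : ℝ → ℝ) (f : ℝ → E) (x : ℝ) : E :=
  ∫ y in (x - T)..x, k (x - y) • f y

theorem setIntegral_Ico_eq_windowConvolution {g : ℝ → ℝ} (hT : 0 ≤ T) (hf : Periodic f T)
    (hg : Periodic g T) (hgk : EqOn g k (Ioo 0 T)) (x : ℝ) :
    ∫ y in Ico 0 T, g (x - y) • f y = windowConvolution T k f x := by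
  have periodic_integrand : Periodic (fun y ↦ g (x - y) • f y) T := fun y ↦ by
    simp only [← sub_sub, hg.sub_eq, hf y]
  calc ∫ y in Ico 0 T, g (x - y) • f y
      = ∫ y in (0 : ℝ)..T, g (x - y) • f y := by
        rw [intervalIntegral.integral_of_le hT, integral_Ico_eq_integral_Ioc]
    _ = ∫ y in (x - T)..x, g (x - y) • f y := by
        simpa using periodic_integrand.intervalIntegral_add_eq 0 (x - T)
    _ = windowConvolution T k f x :=
        intervalIntegral.integral_congr_Ioo_of_le (by linarith) fun y hy ↦ by
          simp only [hgk (show x - y ∈ Ioo 0 T from ⟨by linarith [hy.2], by linarith [hy.1]⟩)]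

theorem windowConvolution_periodic (hf : Periodic f T) (k : ℝ → ℝ) :
    Periodic (windowConvolution T k f) T := fun x ↦
  calc windowConvolution T k f (x + T)
      = ∫ y in (x - T)..x, k (x + T - (y + T)) • f (y + T) := by
        rw [intervalIntegral.integral_comp_add_right (fun y ↦ k (x + T - y) • f y),
          windowConvolution, sub_add_cancel, add_sub_cancel_right]
    _ = windowConvolution T k f x := by
        simp only [windowConvolution, add_sub_add_right_eq_sub, hf _]

theorem hasDerivAt_windowConvolution [CompleteSpace E] (hk : ∀ z, HasDerivAt k (k' z) z)
    (hk' : Continuous k') (hf : Continuous f) (T x : ℝ) :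
    HasDerivAt (windowConvolution T k f)
      (k 0 • f x - k T • f (x - T) + windowConvolution T k' f x) x := by
  have hk_cont : Continuous k := continuous_iff_continuousAt.2 fun z ↦ (hk z).continuousAt
  simpa [windowConvolution] using!
    hasDerivAt_parametric_intervalIntegral (F := fun x y ↦ k (x - y) • f y)
      (F' := fun x y ↦ k' (x - y) • f y) (by unfold uncurry; fun_prop) (by unfold uncurry; fun_prop)
      (fun x y ↦ ((hk (x - y)).comp_sub_const x y).smul_const (f y))
      ((hasDerivAt_id x).sub_const T) (hasDerivAt_id x)

theorem hasDerivAt_windowConvolution_of_periodic [CompleteSpace E]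
    (hk : ∀ z, HasDerivAt k (k' z) z) (hk' : Continuous k') (hf : Continuous f)
    (hf_per : Periodic f T) (x : ℝ) :
    HasDerivAt (windowConvolution T k f) ((k 0 - k T) • f x + windowConvolution T k' f x) x := by
  simpa only [hf_per.sub_eq, sub_smul] using hasDerivAt_windowConvolution hk hk' hf T x

end WindowConvolution

section HelmholtzGreen

variable {E : Type*} [NormedAddCommGroup E] [NormedSpace ℝ E] [CompleteSpace E] {T : ℝ} {f : ℝ → E}

/-- The Green function of `1 - ∂²` on `ℝ / Tℤ`, given by its smooth branch on `[0, T]`. -/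
noncomputable def helmholtzGreen (T z : ℝ) : ℝ :=
  Real.cosh (z - T / 2) / (2 * Real.sinh (T / 2))

/-- The derivative of `helmholtzGreen T`, itself a kernel because the first derivative of the
convolution is again a window convolution. -/
noncomputable def helmholtzGreenDeriv (T z : ℝ) : ℝ :=
  Real.sinh (z - T / 2) / (2 * Real.sinh (T / 2))

theorem hasDerivAt_helmholtzGreen (T z : ℝ) :
    HasDerivAt (helmholtzGreen T) (helmholtzGreenDeriv T z) z :=
  ((Real.hasDerivAt_cosh _).comp_sub_const z (T / 2)).div_const _

theorem hasDerivAt_helmholtzGreenDeriv (T z : ℝ) :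
    HasDerivAt (helmholtzGreenDeriv T) (helmholtzGreen T z) z :=
  ((Real.hasDerivAt_sinh _).comp_sub_const z (T / 2)).div_const _

theorem helmholtzGreen_zero_eq_self (T : ℝ) : helmholtzGreen T 0 = helmholtzGreen T T := by
  simp [helmholtzGreen, sub_half]

theorem helmholtzGreenDeriv_zero_sub_self (hT : T ≠ 0) :
    helmholtzGreenDeriv T 0 - helmholtzGreenDeriv T T = -1 := by
  have hsinh : Real.sinh (T / 2) ≠ 0 := by simpa using hT
  simp only [helmholtzGreenDeriv, zero_sub, Real.sinh_neg, sub_half]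
  field_simp
  norm_num

theorem hasDerivAt_windowConvolution_helmholtzGreen (hf : Continuous f) (hf_per : Periodic f T)
    (x : ℝ) :
    HasDerivAt (windowConvolution T (helmholtzGreen T) f)
      (windowConvolution T (helmholtzGreenDeriv T) f x) x := by
  have hcont : Continuous (helmholtzGreenDeriv T) :=
    continuous_iff_continuousAt.2 fun z ↦ (hasDerivAt_helmholtzGreenDeriv T z).continuousAt
  simpa [helmholtzGreen_zero_eq_self] using hasDerivAt_windowConvolution_of_periodic
    (hasDerivAt_helmholtzGreen T) hcont hf hf_per x

theorem hasDerivAt_windowConvolution_helmholtzGreenDeriv (hT : T ≠ 0) (hf : Continuous f)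
    (hf_per : Periodic f T) (x : ℝ) :
    HasDerivAt (windowConvolution T (helmholtzGreenDeriv T) f)
      (windowConvolution T (helmholtzGreen T) f x - f x) x := by
  have hcont : Continuous (helmholtzGreen T) :=
    continuous_iff_continuousAt.2 fun z ↦ (hasDerivAt_helmholtzGreen T z).continuousAt
  simpa [helmholtzGreenDeriv_zero_sub_self hT, neg_add_eq_sub] using
    hasDerivAt_windowConvolution_of_periodic (hasDerivAt_helmholtzGreenDeriv T) hcont hf hf_per x

theorem green_convolution_solves_helmholtz_circle_general (hT : 0 < T) (hf : Continuous f)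
    (hf_per : Periodic f T) {g : ℝ → ℝ} (hg_per : Periodic g T)
    (hg : EqOn g (helmholtzGreen T) (Ioo 0 T)) {h : ℝ → E}
    (hh : ∀ x, h x = ∫ y in Ico 0 T, g (x - y) • f y) :
    Periodic h T ∧ Differentiable ℝ h ∧ Differentiable ℝ (deriv h) ∧
      ∀ x, h x - deriv (deriv h) x = f x := by
  obtain rfl : h = windowConvolution T (helmholtzGreen T) f :=
    funext fun x ↦ (hh x).trans (setIntegral_Ico_eq_windowConvolution hT.le hf_per hg_per hg x)
  have hderiv := hasDerivAt_windowConvolution_helmholtzGreen hf hf_per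
  have hderiv₂ := hasDerivAt_windowConvolution_helmholtzGreenDeriv hT.ne' hf hf_per
  have deriv_eq : deriv (windowConvolution T (helmholtzGreen T) f) =
      windowConvolution T (helmholtzGreenDeriv T) f :=
    funext fun x ↦ (hderiv x).deriv
  rw [deriv_eq]
  refine ⟨windowConvolution_periodic hf_per _, fun x ↦ (hderiv x).differentiableAt,
    fun x ↦ (hderiv₂ x).differentiableAt, fun x ↦ ?_⟩
  rw [(hderiv₂ x).deriv, sub_sub_cancel]

end HelmholtzGreen

/-- **Helmholtz inversion on the circle.** For `f` continuous and `1`-periodic, the periodic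
convolution `h(x) = ∫_{[0,1)} g(x-y) f(y) dy` with `g(z) = cosh(z-⌊z⌋-1/2)/(2 sinh(1/2))`
is `1`-periodic, twice differentiable, and satisfies `h - h'' = f`. -/
theorem green_convolution_solves_helmholtz_circle
    (f : ℝ → ℝ) (hf_cont : Continuous f) (hf_per : ∀ x, f (x + 1) = f x)
    (g : ℝ → ℝ)
    (hg : ∀ z : ℝ, g z = Real.cosh (z - (⌊z⌋ : ℝ) - 1/2) / (2 * Real.sinh (1/2)))
    (h : ℝ → ℝ)
    (hh : ∀ x, h x = ∫ y in Set.Ico (0:ℝ) 1, g (x - y) * f y) :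
    (∀ x : ℝ, h (x + 1) = h x) ∧
    (∀ x : ℝ, DifferentiableAt ℝ h x) ∧
    (∀ x : ℝ, DifferentiableAt ℝ (deriv h) x) ∧
    (∀ x : ℝ, h x - deriv (deriv h) x = f x) := by
  obtain rfl : g = helmholtzGreen 1 ∘ Int.fract := funext hg
  refine green_convolution_solves_helmholtz_circle_general one_pos hf_cont hf_per
    ((Int.fract_periodic ℝ).comp _) (fun z hz ↦ ?_) hh
  rw [comp_apply, Int.fract_eq_self.2 ⟨hz.1.le, hz.2⟩]
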